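/- arXiv:2406.12811 — 2 statements merged into one kernel-verified Lean document; each statement's English description precedes it below -/
import Mathlib

section
/- Let (M, O, O*) be a finitary binary oriented matroid with ground set E, and suppose 𝒜 is a set of positive signed circuits in O whose domains are pairwise disjoint and whose domains have union E. Then for every D ∈ O*, the sets D⁺ = {e ∈ dom(D) : D(e) = +1} and D⁻ = {e ∈ dom(D) : D(e) = −1} have the same cardinality; moreover, for every positive C ∈ O and every D ∈ O*, the finite sets dom(C) ∩ D⁺ and dom(C) ∩ D⁻ have the same number of elements. -/
/-!
Let `C` be a positive signed circuit and `D` a signed cocircuit. The sum `∑ C(e) * D(e)` counts the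
positive elements of `D` in `dom C` minus the negative ones, so binarity says that the finite sets
`dom C ∩ D⁺` and `dom C ∩ D⁻` have the same size. Since `𝒜` partitions the ground set, bijections
between these sets, one for each `C ∈ 𝒜`, glue together to a bijection between `D⁺` and `D⁻`.
-/

open Set Function

variable {α : Type*}

/-- A circuit of a matroid `M`: a minimal dependent set. A cocircuit of `M` is a
circuit of the dual matroid `M✶`. -/
def Matroid.IsMinDepCircuit (M : Matroid α) (C : Set α) : Prop := Minimal M.Dep C

/-- A signed set, encoded as an integer-valued function taking values `1` or `-1` on its
support (which plays the role of the domain of the signed set) and `0` elsewhere. -/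
def IsSignedSet (g : α → ℤ) : Prop := ∀ e ∈ Function.support g, g e = 1 ∨ g e = -1

/-- A signed set is positive if it is constantly `+1` on its domain. -/
def IsPositive (g : α → ℤ) : Prop := ∀ e ∈ Function.support g, g e = 1

/-- `O` is a signature of the set-system `𝒞`: it consists of exactly two signings of each
member of `𝒞`, these two being negatives of each other, and nothing else. -/
structure IsSignature (𝒞 : Set (Set α)) (O : Set (α → ℤ)) : Prop where
  signed : ∀ g ∈ O, IsSignedSet g
  dom_mem : ∀ g ∈ O, Function.support g ∈ 𝒞
  exists_signing : ∀ C ∈ 𝒞, ∃ g ∈ O, Function.support g = C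
  neg_mem : ∀ g ∈ O, -g ∈ O
  eq_or_eq_neg : ∀ g ∈ O, ∀ h ∈ O, Function.support g = Function.support h → h = g ∨ h = -g

/-- `(M, O, Ostar)` is an oriented matroid: `O` is a signature of the circuits of `M`,
`Ostar` is a signature of the cocircuits of `M`, and orthogonality holds: whenever the
domains of `C ∈ O` and `D ∈ Ostar` intersect, the restriction of `C` to the (finite)
intersection is neither equal to, nor the negative of, the restriction of `D`. -/
structure IsOrientation (M : Matroid α) (O Ostar : Set (α → ℤ)) : Prop where
  circuit_signature : IsSignature {C | M.IsMinDepCircuit C} O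
  cocircuit_signature : IsSignature {D | M✶.IsMinDepCircuit D} Ostar
  orthogonality : ∀ C ∈ O, ∀ D ∈ Ostar,
    (Function.support C ∩ Function.support D).Nonempty →
      (¬ ∀ e ∈ Function.support C ∩ Function.support D, C e = D e) ∧
      (¬ ∀ e ∈ Function.support C ∩ Function.support D, C e = - D e)

/-- The oriented matroid is binary: `∑_{e ∈ dom C ∩ dom D} C(e)·D(e) = 0` for every
signed circuit `C ∈ O` and signed cocircuit `D ∈ Ostar` (a finite sum, since circuits
of a finitary matroid are finite). -/
def IsBinaryOrientation (O Ostar : Set (α → ℤ)) : Prop :=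
  ∀ C ∈ O, ∀ D ∈ Ostar, ∑ᶠ e, C e * D e = 0

/-- The oriented matroid is balanced: in every signed cocircuit, the set of positive
elements and the set of negative elements have the same cardinality. -/
def IsBalanced (Ostar : Set (α → ℤ)) : Prop :=
  ∀ D ∈ Ostar, Cardinal.mk {e : α | D e = 1} = Cardinal.mk {e : α | D e = -1}

theorem finsum_mem_eq_ncard_nsmul {β N : Type*} [AddCommMonoid N] {f : β → N} {s : Set β} {c : N}
    (hs : s.Finite) (hf : ∀ a ∈ s, f a = c) : ∑ᶠ a ∈ s, f a = s.ncard • c := by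
  rw [finsum_mem_congr rfl hf, finsum_mem_eq_finite_toFinset_sum _ hs, Finset.sum_const,
    ncard_eq_toFinset_card s hs]

theorem mk_eq_mk_of_pairwise_disjoint_cover {β ι : Type*} {s : ι → Set β} {A B : Set β}
    (hs : Pairwise (Disjoint on s)) (hA : A ⊆ ⋃ i, s i) (hB : B ⊆ ⋃ i, s i)
    (h : ∀ i, Cardinal.mk ↥(s i ∩ A) = Cardinal.mk ↥(s i ∩ B)) :
    Cardinal.mk A = Cardinal.mk B := by
  have lift_mk_eq_sum {X : Set β} (hX : X ⊆ ⋃ i, s i) :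
      Cardinal.lift (Cardinal.mk X) = Cardinal.sum fun i => Cardinal.mk ↥(s i ∩ X) := by
    have hdisj : Pairwise (Disjoint on fun i => s i ∩ X) := fun i j hij =>
      (hs hij).mono inter_subset_left inter_subset_left
    rw [← Cardinal.mk_iUnion_eq_sum_mk_lift hdisj, ← iUnion_inter, inter_eq_right.mpr hX]
  apply Cardinal.lift_injective
  rw [lift_mk_eq_sum hA, lift_mk_eq_sum hB]
  simp only [h]

theorem IsSignedSet.support_eq {D : α → ℤ} (hD : IsSignedSet D) :
    support D = {e | D e = 1} ∪ {e | D e = -1} := by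
  refine Subset.antisymm hD ?_
  rintro e (he | he) <;> simp_all

theorem IsSignedSet.finsum_mem_eq_ncard_sub_ncard {D : α → ℤ} (hD : IsSignedSet D) {s : Set α}
    (hs : (s ∩ support D).Finite) :
    ∑ᶠ e ∈ s, D e = (s ∩ {e | D e = 1}).ncard - (s ∩ {e | D e = -1}).ncard := by
  rw [← finsum_mem_inter_support]
  rw [hD.support_eq, inter_union_distrib_left] at hs ⊢
  obtain ⟨hpos, hneg⟩ := finite_union.mp hs
  have hdisj : Disjoint (s ∩ {e | D e = 1}) (s ∩ {e | D e = -1}) :=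
    disjoint_left.mpr fun e he he' => by simp_all
  rw [finsum_mem_union hdisj hpos hneg, finsum_mem_eq_ncard_nsmul hpos fun _ he => he.2,
    finsum_mem_eq_ncard_nsmul hneg fun _ he => he.2]
  simp [sub_eq_add_neg]

theorem IsPositive.finsum_mul_eq_finsum_mem {C : α → ℤ} (hC : IsPositive C) (f : α → ℤ) :
    ∑ᶠ e, C e * f e = ∑ᶠ e ∈ support C, f e := by
  rw [finsum_mem_def]
  refine finsum_congr fun e => ?_
  by_cases he : e ∈ support C
  · rw [indicator_of_mem he, hC e he, one_mul]
  · rw [indicator_of_notMem he, notMem_support.mp he, zero_mul]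

theorem IsPositive.ncard_inter_eq_ncard_inter {C D : α → ℤ} (hC : IsPositive C)
    (hD : IsSignedSet D) (hfin : (support C ∩ support D).Finite) (horth : ∑ᶠ e, C e * D e = 0) :
    (support C ∩ {e | D e = 1}).ncard = (support C ∩ {e | D e = -1}).ncard := by
  rw [hC.finsum_mul_eq_finsum_mem, hD.finsum_mem_eq_ncard_sub_ncard hfin, sub_eq_zero] at horth
  exact_mod_cast horth

theorem IsSignedSet.mk_pos_eq_mk_neg {D : α → ℤ} (hD : IsSignedSet D) {𝒜 : Set (α → ℤ)}
    (hpos : ∀ C ∈ 𝒜, IsPositive C) (hdisj : 𝒜.Pairwise (Disjoint on support))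
    (hcover : support D ⊆ ⋃ C ∈ 𝒜, support C)
    (hfin : ∀ C ∈ 𝒜, (support C ∩ support D).Finite) (horth : ∀ C ∈ 𝒜, ∑ᶠ e, C e * D e = 0) :
    Cardinal.mk {e | D e = 1} = Cardinal.mk {e | D e = -1} := by
  rw [hD.support_eq, biUnion_eq_iUnion, union_subset_iff] at hcover
  refine mk_eq_mk_of_pairwise_disjoint_cover (hdisj.on_injective Subtype.val_injective Subtype.prop)
    hcover.1 hcover.2 fun ⟨C, hC⟩ => ?_
  have hfin_union := hfin C hC
  rw [hD.support_eq, inter_union_distrib_left] at hfin_union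
  obtain ⟨hfin_pos, hfin_neg⟩ := finite_union.mp hfin_union
  rw [← cast_ncard hfin_pos, ← cast_ncard hfin_neg,
    (hpos C hC).ncard_inter_eq_ncard_inter hD (hfin C hC) (horth C hC)]

theorem isMinDepCircuit_iff_isCircuit {M : Matroid α} {C : Set α} :
    M.IsMinDepCircuit C ↔ M.IsCircuit C :=
  Iff.rfl

theorem IsOrientation.finite_support {M : Matroid α} [M.Finitary] {O Ostar : Set (α → ℤ)}
    (hor : IsOrientation M O Ostar) {C : α → ℤ} (hC : C ∈ O) : (support C).Finite :=
  (isMinDepCircuit_iff_isCircuit.mp (hor.circuit_signature.dom_mem C hC)).finite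

theorem IsOrientation.support_subset_ground {M : Matroid α} {O Ostar : Set (α → ℤ)}
    (hor : IsOrientation M O Ostar) {D : α → ℤ} (hD : D ∈ Ostar) : support D ⊆ M.E :=
  (isMinDepCircuit_iff_isCircuit.mp (hor.cocircuit_signature.dom_mem D hD)).subset_ground

theorem balanced_of_partition_general {O Ostar : Set (α → ℤ)}
    (hsigned : ∀ D ∈ Ostar, IsSignedSet D)
    (hfin : ∀ C ∈ O, ∀ D ∈ Ostar, (support C ∩ support D).Finite)
    (hbin : IsBinaryOrientation O Ostar)
    {𝒜 : Set (α → ℤ)} (h𝒜O : 𝒜 ⊆ O) (hpos : ∀ C ∈ 𝒜, IsPositive C)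
    (hdisj : 𝒜.Pairwise (Disjoint on support))
    (hcover : ∀ D ∈ Ostar, support D ⊆ ⋃ C ∈ 𝒜, support C) :
    IsBalanced Ostar ∧
    ∀ C ∈ O, IsPositive C → ∀ D ∈ Ostar,
      (support C ∩ {e | D e = 1}).ncard = (support C ∩ {e | D e = -1}).ncard := by
  constructor
  · intro D hD
    exact (hsigned D hD).mk_pos_eq_mk_neg hpos hdisj (hcover D hD)
      (fun C hC => hfin C (h𝒜O hC) D hD) (fun C hC => hbin C (h𝒜O hC) D hD)
  · intro C hC hCpos D hD
    exact hCpos.ncard_inter_eq_ncard_inter (hsigned D hD) (hfin C hC D hD) (hbin C hC D hD)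

/-- If a finitary binary oriented matroid is partitioned into positive signed circuits,
then it is balanced; moreover every positive signed circuit meets the positive and the
negative parts of any signed cocircuit in the same (finite) number of elements. -/
theorem balanced_of_partition (M : Matroid α) [M.Finitary] (O Ostar : Set (α → ℤ))
    (hor : IsOrientation M O Ostar) (hbin : IsBinaryOrientation O Ostar)
    (𝒜 : Set (α → ℤ)) (h𝒜O : 𝒜 ⊆ O) (hpos : ∀ C ∈ 𝒜, IsPositive C)
    (hdisj : 𝒜.Pairwise (fun C C' => Disjoint (Function.support C) (Function.support C')))
    (hcover : ⋃ C ∈ 𝒜, Function.support C = M.E) :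
    IsBalanced Ostar ∧
    ∀ C ∈ O, IsPositive C → ∀ D ∈ Ostar,
      (Function.support C ∩ {e | D e = 1}).ncard =
        (Function.support C ∩ {e | D e = -1}).ncard :=
  balanced_of_partition_general hor.cocircuit_signature.signed
    (fun _ hC _ _ => (hor.finite_support hC).inter_of_left _) hbin h𝒜O hpos hdisj
    fun _ hD => hcover ▸ hor.support_subset_ground hD
end

section
/- Every finitary binary balanced oriented matroid with countable ground set can be partitioned into directed circuits: if (M, O, O*) is a finitary binary oriented matroid that is balanced and whose ground set E is countable, then there is a set 𝒜 of positive signed circuits in O whose domains are pairwise disjoint and whose domains have union E. -/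
/-!
Let `W` be the union of finitely many disjoint positive circuits and `e` an element outside `W`.
If no positive circuit through `e` avoids `W`, then some signed cocircuit is `+1` at `e` and
nonnegative off `W`. Its negative elements all lie in `W`, where orthogonality to the chosen
circuits makes the positive and negative elements equinumerous; by balance no positive element is
left for `e`. So every finite disjoint family extends to cover `e`, and countability of the ground
set lets us cover all elements one after another.

The alternative between circuit and cocircuit is proved inside `U`, the complement of `W`. Take `G`
maximal such that no signed circuit `C ⊆ U` with `C e = 1` has all its negative elements in `G`.
Adding circuits and splitting the sum into conformal circuits shows that every `b ∈ U` outside `G`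
is parallel to `e` modulo `G`: some signed circuit is `+1` at `e`, `-1` at `b`, and otherwise
supported in `G`. A signed cocircuit that is `+1` at `e` and vanishes on the rest of `G ∩ U` is then
`+1` at every such `b`.
-/

open Set Function

variable {α : Type*}

lemma exists_pairwiseDisjoint_cover {ι : Type*} (s : ι → Set α) (P : Set ι) {E : Set α}
    (hE : E.Countable)
    (hext : ∀ A : Finset ι, ↑A ⊆ P → (A : Set ι).PairwiseDisjoint s →
      ∀ e ∈ E, e ∉ ⋃ i ∈ A, s i → ∃ i ∈ P, e ∈ s i ∧ ∀ j ∈ A, Disjoint (s i) (s j)) :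
    ∃ A ⊆ P, A.PairwiseDisjoint s ∧ E ⊆ ⋃ i ∈ A, s i := by
  classical
  let Partial := {A : Finset ι // ↑A ⊆ P ∧ (A : Set ι).PairwiseDisjoint s}
  let covering (e : E) : Order.Cofinal Partial :=
    { carrier := {A | (e : α) ∈ ⋃ i ∈ A.1, s i}
      isCofinal := by
        rintro ⟨A, hAP, hA⟩
        by_cases heA : (e : α) ∈ ⋃ i ∈ A, s i
        · exact ⟨⟨A, hAP, hA⟩, heA, le_rfl⟩
        obtain ⟨i, hi, hei, hdisj⟩ := hext A hAP hA e e.2 heA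
        refine ⟨⟨insert i A, ?_, ?_⟩, ?_, Finset.subset_insert i A⟩
        · simpa using insert_subset hi hAP
        · simpa using hA.insert fun j hj _ => hdisj j hj
        · exact mem_biUnion (Finset.mem_insert_self i A) hei }
  let _ : Encodable E := hE.toEncodable
  let I : Order.Ideal Partial := Order.idealOfCofinals ⟨∅, by simp⟩ covering
  refine ⟨⋃ A : I, (A.1.1 : Set ι), iUnion_subset fun A => A.1.2.1, ?_, fun e he => ?_⟩
  · refine (pairwiseDisjoint_iUnion ?_).2 fun A => A.1.2.2
    intro A B
    obtain ⟨C, hC, hAC, hBC⟩ := I.directed A.1 A.2 B.1 B.2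
    exact ⟨⟨C, hC⟩, Finset.coe_subset.2 hAC, Finset.coe_subset.2 hBC⟩
  · obtain ⟨A, heA, hA⟩ := Order.cofinal_meets_idealOfCofinals ⟨∅, by simp⟩ covering ⟨e, he⟩
    obtain ⟨i, hi, hei⟩ := mem_iUnion₂.1 heA
    exact mem_biUnion (mem_iUnion.2 ⟨⟨A, hA⟩, hi⟩) hei

lemma exists_maximal_forall_not_subset {ι : Type*} {S : Set ι} {f : ι → Set α}
    (hfin : ∀ i ∈ S, (f i).Finite) (hne : ∀ i ∈ S, (f i).Nonempty) :
    ∃ G, Maximal (fun G => ∀ i ∈ S, ¬ f i ⊆ G) G := by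
  have hchar : Order.IsOfFiniteCharacter {G : Set α | ∀ i ∈ S, ¬ f i ⊆ G} := fun G =>
    ⟨fun hG F hFG _ i hi hiF => hG i hi (hiF.trans hFG),
      fun hG i hi hiG => hG (f i) hiG (hfin i hi) i hi Subset.rfl⟩
  obtain ⟨G, -, hG⟩ := hchar.exists_maximal (x := ∅)
    fun i hi hi0 => (hne i hi).ne_empty (subset_empty_iff.1 hi0)
  exact ⟨G, hG⟩

lemma exists_isCocircuit_disjoint_of_notMem_closure {M : Matroid α} {e : α} {G : Set α}
    (he : e ∈ M.E) (heG : e ∉ M.closure G) :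
    ∃ K, M.IsCocircuit K ∧ e ∈ K ∧ Disjoint K G := by
  obtain ⟨K, hK, heK⟩ :=
    (Matroid.contract_isNonloop_iff.2 ⟨he, heG⟩ : (M.contract G).IsNonloop e).exists_mem_isCocircuit
  exact ⟨K, hK.of_contract, heK, (subset_sdiff.1 hK.subset_ground).2⟩

lemma IsSignedSet.sum_eq_card_sub_card {D : α → ℤ} (hD : IsSignedSet D) (W : Finset α) :
    ∑ x ∈ W, D x =
      (Finset.card (W.filter fun x => D x = 1) : ℤ) - Finset.card (W.filter fun x => D x = -1) := by
  have hval (x : α) : D x = (if D x = 1 then 1 else 0) - if D x = -1 then 1 else 0 := by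
    have := hD x
    grind [mem_support]
  rw [Finset.sum_congr rfl fun x _ => hval x, Finset.sum_sub_distrib, Finset.sum_boole,
    Finset.sum_boole]

lemma IsSignedSet.support_subset_of_finsum_mem_eq_zero {D : α → ℤ} (hD : IsSignedSet D)
    (hbal : Cardinal.mk {x | D x = 1} = Cardinal.mk {x | D x = -1}) {W : Set α}
    (hW : W.Finite) (hsum : ∑ᶠ x ∈ W, D x = 0) (hnonneg : ∀ x ∉ W, 0 ≤ D x) : support D ⊆ W := by
  lift W to Finset α using hW
  rw [finsum_mem_coe_finset] at hsum
  have hnegW : {x | D x = -1} ⊆ W := fun x hx => by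
    by_contra hxW
    have hx : D x = -1 := hx
    exact absurd (hnonneg x hxW) (by lia)
  have hneg : {x | D x = -1} = (W.filter fun x => D x = -1 : Finset α) := by
    ext x
    simpa using @hnegW x
  have hfin : {x | D x = 1}.Finite := by
    rw [← Cardinal.lt_aleph0_iff_set_finite, hbal, Cardinal.lt_aleph0_iff_set_finite]
    exact W.finite_toSet.subset hnegW
  have hcard : {x | D x = 1}.ncard = Finset.card (W.filter fun x => D x = 1) := by
    have hcard' : {x | D x = 1}.ncard = {x | D x = -1}.ncard := congrArg Cardinal.toNat hbal
    have hsum' := hD.sum_eq_card_sub_card W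
    rw [hneg, ncard_coe_finset] at hcard'
    lia
  have hpos : (W.filter fun x => D x = 1 : Finset α) = {x | D x = 1} :=
    eq_of_subset_of_ncard_le (fun x hx => (Finset.mem_filter.1 hx).2)
      (by rw [hcard, ncard_coe_finset]) hfin
  intro x hx
  rcases hD x hx with h | h
  · exact Finset.mem_of_mem_filter x (hpos.superset h)
  · exact hnegW h

lemma IsPositive.finsum_mem_support {C : α → ℤ} (hC : IsPositive C) (D : α → ℤ) :
    ∑ᶠ x ∈ support C, D x = ∑ᶠ x, C x * D x := by
  rw [finsum_mem_def]
  refine finsum_congr fun x => ?_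
  by_cases hx : x ∈ support C
  · rw [indicator_of_mem hx, hC x hx, one_mul]
  · rw [indicator_of_notMem hx, notMem_support.1 hx, zero_mul]

lemma IsBinaryOrientation.finsum_mem_biUnion_support_eq_zero {O Ostar : Set (α → ℤ)}
    (hbin : IsBinaryOrientation O Ostar) {A : Finset (α → ℤ)} (hA : ∀ C ∈ A, C ∈ O ∧ IsPositive C)
    (hfin : ∀ C ∈ A, (support C).Finite) (hdisj : (A : Set (α → ℤ)).PairwiseDisjoint support)
    {D : α → ℤ} (hD : D ∈ Ostar) : ∑ᶠ x ∈ ⋃ C ∈ A, support C, D x = 0 := by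
  calc ∑ᶠ x ∈ ⋃ C ∈ A, support C, D x
      = ∑ᶠ C ∈ (A : Set (α → ℤ)), ∑ᶠ x ∈ support C, D x :=
        finsum_mem_biUnion hdisj A.finite_toSet hfin
    _ = 0 := finsum_mem_eq_zero_of_forall_eq_zero fun C hC => by
        rw [(hA C hC).2.finsum_mem_support, hbin C (hA C hC).1 D hD]

lemma IsSignature.exists_apply_eq_one {𝒞 : Set (Set α)} {O : Set (α → ℤ)} (hO : IsSignature 𝒞 O)
    {C : Set α} (hC : C ∈ 𝒞) {e : α} (he : e ∈ C) : ∃ g ∈ O, support g = C ∧ g e = 1 := by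
  obtain ⟨g, hg, rfl⟩ := hO.exists_signing C hC
  rcases hO.signed g hg e he with h | h
  · exact ⟨g, hg, rfl, h⟩
  · exact ⟨-g, hO.neg_mem g hg, support_neg g, by simp [h]⟩

/-- The elements at which an integer vector is negative. For a signed set `C` this is `C⁻`. -/
def negSupport (v : α → ℤ) : Set α := {x | v x < 0}

lemma negSupport_subset_support (v : α → ℤ) : negSupport v ⊆ support v := fun _ hx => hx.ne

lemma IsSignedSet.isPositive_of_negSupport_eq_empty {C : α → ℤ} (hC : IsSignedSet C)
    (h : negSupport C = ∅) : IsPositive C := by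
  intro x hx
  refine (hC x hx).resolve_right fun hneg => ?_
  exact h.subset (show C x < 0 by lia)

/-- Sign conformity of integer vectors: `u` is nonzero only where `v` is, and with the same sign.
The size of the entries is not compared. -/
def Conforms (u v : α → ℤ) : Prop := ∀ x, (0 < u x → 0 < v x) ∧ (u x < 0 → v x < 0)

namespace Conforms

variable {u v w : α → ℤ}

lemma trans (huv : Conforms u v) (hvw : Conforms v w) : Conforms u w := fun x =>
  ⟨(hvw x).1 ∘ (huv x).1, (hvw x).2 ∘ (huv x).2⟩

lemma support_subset (h : Conforms u v) : support u ⊆ support v := fun x hx => by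
  have := h x
  simp only [mem_support] at hx ⊢
  lia

lemma negSupport_subset (h : Conforms u v) : negSupport u ⊆ negSupport v := fun x => (h x).2

lemma sub_of_isSignedSet (h : Conforms u v) (hu : IsSignedSet u) : Conforms (v - u) v := by
  intro x
  have := h x
  have := hu x
  grind [mem_support, Pi.sub_apply]

end Conforms

lemma IsSignedSet.exists_conforms_sub_zsmul {C v : α → ℤ} (hC : IsSignedSet C)
    (hv : (support v).Finite) (hCv : support C ⊆ support v) {x : α} (hx : 0 < C x * v x) :
    ∃ n : ℤ, 0 < n ∧ Conforms (v - n • C) v ∧ support (v - n • C) ⊂ support v := by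
  have hagree (z : α) : 0 < C z * v z ↔ C z = 1 ∧ 0 < v z ∨ C z = -1 ∧ v z < 0 := by
    by_cases hz : C z = 0
    · simp [hz]
    · rcases hC z hz with h | h <;> simp [h]
  have hfin : {z | 0 < C z * v z}.Finite :=
    hv.subset fun z hz => right_ne_zero_of_mul (ne_of_gt hz)
  obtain ⟨y, hy, hmin⟩ := exists_min_image _ (fun z => |v z|) hfin ⟨x, hx⟩
  have hconf : Conforms (v - |v y| • C) v := by
    intro z
    have hz := hmin z
    have hCz := hC z
    simp only [mem_ofPred_eq, hagree, mem_support, Pi.sub_apply, Pi.smul_apply, smul_eq_mul]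
      at hz hCz ⊢
    have hsupp : C z ≠ 0 → v z ≠ 0 := @hCv z
    have hyn := abs_nonneg (v y)
    rcases eq_or_ne (C z) 0 with h | h
    · simp [h]
    · rcases hCz h with h | h <;> rw [h] at hz ⊢ <;> grind
  refine ⟨|v y|, abs_pos.2 (right_ne_zero_of_mul hy.ne'), hconf, hconf.support_subset, ?_⟩
  refine fun hsub => hsub (right_ne_zero_of_mul hy.ne' : y ∈ support v) ?_
  rcases (hagree y).1 hy with ⟨h, hvy⟩ | ⟨h, hvy⟩
  · simp [h, abs_of_pos hvy]
  · simp [h, abs_of_neg hvy]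

/-- The integral cycle group of an oriented matroid with signed cocircuits `Ostar`: the finitely
supported integer vectors on the ground set that are orthogonal to every signed cocircuit. -/
def cycleGroup (M : Matroid α) (Ostar : Set (α → ℤ)) : AddSubgroup (α → ℤ) where
  carrier := {v | (support v).Finite ∧ support v ⊆ M.E ∧ ∀ D ∈ Ostar, ∑ᶠ x, v x * D x = 0}
  zero_mem' := by simp
  add_mem' := by
    rintro u v ⟨hu, huE, huD⟩ ⟨hv, hvE, hvD⟩
    refine ⟨(hu.union hv).subset (support_add u v),
      (support_add u v).trans (union_subset huE hvE), fun D hD => ?_⟩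
    simp only [Pi.add_apply, add_mul]
    rw [finsum_add_distrib (hu.subset (support_mul_subset_left u D))
      (hv.subset (support_mul_subset_left v D)), huD D hD, hvD D hD, add_zero]
  neg_mem' := by
    rintro v ⟨hv, hvE, hvD⟩
    refine ⟨by rwa [support_neg], by rwa [support_neg], fun D hD => ?_⟩
    simp only [Pi.neg_apply, neg_mul, finsum_neg_distrib, hvD D hD, neg_zero]

/-- The signed circuits inside `U` having `e` as a positive element. -/
def circuitsThrough (O : Set (α → ℤ)) (e : α) (U : Set α) : Set (α → ℤ) :=
  {C ∈ O | C e = 1 ∧ support C ⊆ U}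

section Orientation

variable {M : Matroid α} {O Ostar : Set (α → ℤ)} {e : α}

lemma IsSignature.exists_isCircuit_subset_support
    (hs : IsSignature {D | M✶.IsMinDepCircuit D} Ostar) {v : α → ℤ}
    (hv : v ∈ cycleGroup M Ostar) (he : v e ≠ 0) : ∃ K ⊆ support v, M.IsCircuit K := by
  obtain ⟨-, hvE, hvD⟩ := hv
  rw [← Matroid.dep_iff_superset_isCircuit hvE, ← M.not_indep_iff hvE]
  intro hindep
  obtain ⟨K, hK, hKv⟩ := hindep.exists_isCocircuit_inter_eq_mem he
  obtain ⟨D, hD, hDK, hDe⟩ := hs.exists_apply_eq_one hK (hKv.superset rfl).1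
  refine he ?_
  rw [← hvD D hD, finsum_eq_single _ e, hDe, mul_one]
  intro x hxe
  by_contra hx
  exact hxe (hKv.subset ⟨hDK ▸ right_ne_zero_of_mul hx, left_ne_zero_of_mul hx⟩)

namespace IsOrientation

lemma finite_support_s12 [M.Finitary] (hor : IsOrientation M O Ostar) {C : α → ℤ} (hC : C ∈ O) :
    (support C).Finite :=
  Matroid.IsCircuit.finite (M := M) (hor.circuit_signature.dom_mem C hC)

lemma support_subset_ground_s12 (hor : IsOrientation M O Ostar) {C : α → ℤ} (hC : C ∈ O) :
    support C ⊆ M.E :=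
  Matroid.IsCircuit.subset_ground (M := M) (hor.circuit_signature.dom_mem C hC)

lemma mem_cycleGroup (hor : IsOrientation M O Ostar) (hbin : IsBinaryOrientation O Ostar)
    {C : α → ℤ} (hC : C ∈ O) (hfin : (support C).Finite) : C ∈ cycleGroup M Ostar :=
  ⟨hfin, hor.support_subset_ground_s12 hC, hbin C hC⟩

lemma exists_circuit_or_cocircuit (hor : IsOrientation M O Ostar) {G : Set α} (he : e ∈ M.E)
    (heG : e ∉ G) :
    (∃ C ∈ O, C e = 1 ∧ support C ⊆ insert e G) ∨
      ∃ D ∈ Ostar, D e = 1 ∧ Disjoint (support D) G := by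
  by_cases hcl : e ∈ M.closure G
  · obtain ⟨K, hKG, hK, heK⟩ := Matroid.exists_isCircuit_of_mem_closure hcl heG
    obtain ⟨C, hC, rfl, hCe⟩ := hor.circuit_signature.exists_apply_eq_one hK heK
    exact .inl ⟨C, hC, hCe, hKG⟩
  · obtain ⟨K, hK, heK, hKG⟩ := exists_isCocircuit_disjoint_of_notMem_closure he hcl
    obtain ⟨D, hD, rfl, hDe⟩ := hor.cocircuit_signature.exists_apply_eq_one hK heK
    exact .inr ⟨D, hD, hDe, hKG⟩

lemma exists_conforms_of_forall_mul_nonpos (hor : IsOrientation M O Ostar) {v : α → ℤ}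
    (hv : v ∈ cycleGroup M Ostar) (he : v e ≠ 0)
    (hle : ∀ C ∈ O, support C ⊆ support v → C e ≤ 0 → ∀ x, C x * v x ≤ 0) :
    ∃ C ∈ O, C e = 1 ∧ Conforms C v := by
  have hge : ∀ C ∈ O, support C ⊆ support v → 0 ≤ C e → ∀ x, 0 ≤ C x * v x := by
    intro C hC hCv hCe x
    simpa using hle (-C) (hor.circuit_signature.neg_mem C hC) (by rwa [support_neg])
      (by simpa using hCe) x
  obtain ⟨K, hKv, hK⟩ := hor.cocircuit_signature.exists_isCircuit_subset_support hv he
  have heK : e ∈ K := by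
    by_contra heK
    obtain ⟨x, hx⟩ := hK.nonempty
    obtain ⟨C, hC, rfl, hCx⟩ := hor.circuit_signature.exists_apply_eq_one hK hx
    have hCe : C e = 0 := notMem_support.1 heK
    have hzero : C x * v x = 0 := (hle C hC hKv hCe.le x).antisymm (hge C hC hKv hCe.ge x)
    exact hKv hx (by simpa [hCx] using hzero)
  obtain ⟨C, hC, rfl, hCe⟩ := hor.circuit_signature.exists_apply_eq_one hK heK
  refine ⟨C, hC, hCe, fun x => ?_⟩
  have hagree : 0 ≤ C x * v x := hge C hC hKv (by simp [hCe]) x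
  have hsupp : C x ≠ 0 → v x ≠ 0 := @hKv x
  exact ⟨fun h => (nonneg_of_mul_nonneg_right hagree h).lt_of_ne' (hsupp h.ne'),
    fun h => (nonpos_of_mul_nonneg_right hagree h).lt_of_ne (hsupp h.ne)⟩

lemma exists_conforms_of_pos (hor : IsOrientation M O Ostar) (hbin : IsBinaryOrientation O Ostar)
    {v : α → ℤ} (hv : v ∈ cycleGroup M Ostar) (he : 0 < v e) :
    ∃ C ∈ O, C e = 1 ∧ Conforms C v := by
  induction hn : (support v).ncard using Nat.strong_induction_on generalizing v with
  | _ n ih =>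
  subst hn
  by_cases hred : ∃ C ∈ O, support C ⊆ support v ∧ C e ≤ 0 ∧ ∃ x, 0 < C x * v x
  · obtain ⟨C, hC, hCv, hCe, x, hx⟩ := hred
    obtain ⟨n, hn, hconf, hlt⟩ :=
      (hor.circuit_signature.signed C hC).exists_conforms_sub_zsmul hv.1 hCv hx
    have hmem : v - n • C ∈ cycleGroup M Ostar :=
      sub_mem hv (zsmul_mem (hor.mem_cycleGroup hbin hC (hv.1.subset hCv)) n)
    have hpos : 0 < (v - n • C) e := by
      have := mul_nonpos_of_nonneg_of_nonpos hn.le hCe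
      simp only [Pi.sub_apply, Pi.smul_apply, smul_eq_mul]
      lia
    obtain ⟨C', hC', hCe', hconf'⟩ := ih _ (ncard_lt_ncard hlt hv.1) hmem hpos rfl
    exact ⟨C', hC', hCe', hconf'.trans hconf⟩
  · push Not at hred
    exact hor.exists_conforms_of_forall_mul_nonpos hv he.ne' hred

-- The vector `v` splits off two conformal circuits through `e`, and only one of them can be
-- negative at `b`.
lemma exists_negSupport_subset_sdiff (hor : IsOrientation M O Ostar)
    (hbin : IsBinaryOrientation O Ostar) {v : α → ℤ} (hv : v ∈ cycleGroup M Ostar)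
    (he : 2 ≤ v e) {b : α} (hb : -1 ≤ v b) :
    ∃ C ∈ O, C e = 1 ∧ support C ⊆ support v ∧ negSupport C ⊆ negSupport v \ {b} := by
  obtain ⟨C, hC, hCe, hconf⟩ := hor.exists_conforms_of_pos hbin hv (by lia : 0 < v e)
  by_cases hbC : b ∈ negSupport C
  swap
  · exact ⟨C, hC, hCe, hconf.support_subset,
      subset_sdiff_singleton hconf.negSupport_subset hbC⟩
  have hsigned := hor.circuit_signature.signed C hC
  have hCb : C b = -1 := (hsigned b hbC.ne).resolve_left (by have : C b < 0 := hbC; lia)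
  have hmem : v - C ∈ cycleGroup M Ostar :=
    sub_mem hv (hor.mem_cycleGroup hbin hC (hv.1.subset hconf.support_subset))
  obtain ⟨C', hC', hCe', hconf'⟩ := hor.exists_conforms_of_pos hbin hmem
    (show 0 < (v - C) e by simp only [Pi.sub_apply]; lia)
  have hconfv := hconf'.trans (hconf.sub_of_isSignedSet hsigned)
  refine ⟨C', hC', hCe', hconfv.support_subset,
    subset_sdiff_singleton hconfv.negSupport_subset fun hbC' => ?_⟩
  have hneg : (v - C) b < 0 := hconf'.negSupport_subset hbC'
  simp only [Pi.sub_apply] at hneg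
  lia

lemma exists_maximal_forall_not_negSupport_subset [M.Finitary] (hor : IsOrientation M O Ostar)
    {U : Set α} (hpos : ∀ C ∈ circuitsThrough O e U, ¬ IsPositive C) :
    ∃ G, Maximal (fun G => ∀ C ∈ circuitsThrough O e U, ¬ negSupport C ⊆ G) G := by
  refine exists_maximal_forall_not_subset
    (fun C hC => (hor.finite_support_s12 hC.1).subset (negSupport_subset_support C))
    fun C hC => nonempty_iff_ne_empty.2 fun hneg => hpos C hC ?_
  exact (hor.circuit_signature.signed C hC.1).isPositive_of_negSupport_eq_empty hneg

section Maximal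

variable {U G : Set α}

lemma exists_negSupport_subset_insert (hor : IsOrientation M O Ostar)
    (hG : Maximal (fun G => ∀ C ∈ circuitsThrough O e U, ¬ negSupport C ⊆ G) G)
    {b : α} (hb : b ∉ G) :
    ∃ C ∈ circuitsThrough O e U, C b = -1 ∧ negSupport C ⊆ insert b G := by
  obtain ⟨C, hC, hneg⟩ : ∃ C ∈ circuitsThrough O e U, negSupport C ⊆ insert b G := by
    simpa using hG.not_prop_of_gt (ssubset_insert hb)
  have hCb : C b < 0 := by
    by_contra hCb
    exact hG.prop C hC ((subset_insert_iff_of_notMem (show b ∉ negSupport C from hCb)).1 hneg)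
  exact ⟨C, hC, (hor.circuit_signature.signed C hC.1 b hCb.ne).resolve_left (by lia), hneg⟩

lemma exists_support_subset_insert_insert [M.Finitary] (hor : IsOrientation M O Ostar)
    (hbin : IsBinaryOrientation O Ostar)
    (hG : Maximal (fun G => ∀ C ∈ circuitsThrough O e U, ¬ negSupport C ⊆ G) G)
    {b : α} (hb : b ∉ G) :
    ∃ C ∈ circuitsThrough O e U, C b = -1 ∧ support C ⊆ insert e (insert b G) := by
  obtain ⟨C, ⟨hC, hCe, hCU⟩, hCb, hneg⟩ := hor.exists_negSupport_subset_insert hG hb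
  refine ⟨C, ⟨hC, hCe, hCU⟩, hCb, fun p hp => ?_⟩
  by_contra hpG
  simp only [mem_insert_iff, not_or] at hpG
  obtain ⟨hpe, hpb, hpG⟩ := hpG
  have hCp : C p = 1 := (hor.circuit_signature.signed C hC p hp).resolve_right fun h =>
    (hneg (show C p < 0 by lia)).elim hpb hpG
  obtain ⟨C', ⟨hC', hCe', hCU'⟩, hCp', hneg'⟩ := hor.exists_negSupport_subset_insert hG hpG
  have hnonneg' : ∀ x ∉ insert p G, 0 ≤ C' x := fun x hx => not_lt.1 fun h => hx (hneg' h)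
  have hmem {C} (hC : C ∈ O) := hor.mem_cycleGroup hbin hC (hor.finite_support_s12 hC)
  -- `C + C'` is `2` at `e`, vanishes at `p`, and is negative only in `insert b G`.
  obtain ⟨C'', hC'', hCe'', hsupp, hsub⟩ := hor.exists_negSupport_subset_sdiff hbin
    (add_mem (hmem hC) (hmem hC')) (b := b) (show 2 ≤ C e + C' e by lia)
    (show -1 ≤ C b + C' b by have := hnonneg' b (by simp [Ne.symm hpb, hb]); lia)
  have hU : support C'' ⊆ U := hsupp.trans ((support_add C C').trans (union_subset hCU hCU'))
  refine hG.prop C'' ⟨hC'', hCe'', hU⟩ fun x hx => ?_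
  obtain ⟨hxneg, hxb⟩ := hsub hx
  have hxneg : C x + C' x < 0 := hxneg
  by_contra hxG
  have hCx : 0 ≤ C x := not_lt.1 fun h => (hneg h).elim hxb hxG
  have hxp : x ≠ p := by rintro rfl; lia
  have hCx' : 0 ≤ C' x := hnonneg' x (by simp [hxp, hxG])
  lia

lemma exists_cocircuit_nonneg_of_maximal [M.Finitary] (hor : IsOrientation M O Ostar)
    (hbin : IsBinaryOrientation O Ostar) (he : e ∈ M.E) (heU : e ∈ U)
    (hG : Maximal (fun G => ∀ C ∈ circuitsThrough O e U, ¬ negSupport C ⊆ G) G) :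
    ∃ D ∈ Ostar, D e = 1 ∧ ∀ x ∈ U, 0 ≤ D x := by
  rcases hor.exists_circuit_or_cocircuit (G := (G ∩ U) \ {e}) he (by simp) with
    ⟨C, hC, hCe, hCG⟩ | ⟨D, hD, hDe, hDG⟩
  · have hCU : support C ⊆ U := hCG.trans (by grind)
    refine absurd (fun x hx => ?_) (hG.prop C ⟨hC, hCe, hCU⟩)
    have hxe : x ≠ e := by
      rintro rfl
      exact absurd hx (by simp [negSupport, hCe])
    exact ((hCG (negSupport_subset_support C hx)).resolve_left hxe).1.1
  have hD0 : ∀ x ∈ G, x ∈ U → x ≠ e → D x = 0 := fun x hxG hxU hxe =>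
    notMem_support.1 (hDG.notMem_of_mem_right ⟨⟨hxG, hxU⟩, hxe⟩)
  refine ⟨D, hD, hDe, fun b hbU => ?_⟩
  by_cases hbe : b = e
  · simp [hbe, hDe]
  by_cases hbG : b ∈ G
  · exact (hD0 b hbG hbU hbe).ge
  obtain ⟨C, ⟨hC, hCe, hCU⟩, hCb, hCG⟩ := hor.exists_support_subset_insert_insert hbin hG hbG
  classical
  have horth : ∑ x ∈ {e, b}, C x * D x = 0 := by
    rw [← hbin C hC D hD, finsum_eq_sum_of_support_subset]
    intro x hx
    have hxC : x ∈ support C := left_ne_zero_of_mul hx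
    have hxD : D x ≠ 0 := right_ne_zero_of_mul hx
    have := hCG hxC
    have := hD0 x
    have := hCU hxC
    grind
  rw [Finset.sum_pair (Ne.symm hbe), hCe, hDe, hCb] at horth
  lia

end Maximal

theorem exists_isPositive_or_cocircuit_nonneg [M.Finitary] (hor : IsOrientation M O Ostar)
    (hbin : IsBinaryOrientation O Ostar) (he : e ∈ M.E) {U : Set α} (heU : e ∈ U) :
    (∃ C ∈ circuitsThrough O e U, IsPositive C) ∨ ∃ D ∈ Ostar, D e = 1 ∧ ∀ x ∈ U, 0 ≤ D x := by
  refine or_iff_not_imp_left.2 fun hpos => ?_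
  push Not at hpos
  obtain ⟨G, hG⟩ := hor.exists_maximal_forall_not_negSupport_subset hpos
  exact hor.exists_cocircuit_nonneg_of_maximal hbin he heU hG

theorem exists_isPositive_disjoint [M.Finitary] (hor : IsOrientation M O Ostar)
    (hbin : IsBinaryOrientation O Ostar) (hbal : IsBalanced Ostar) {A : Finset (α → ℤ)}
    (hA : ∀ C ∈ A, C ∈ O ∧ IsPositive C) (hdisj : (A : Set (α → ℤ)).PairwiseDisjoint support)
    (he : e ∈ M.E) (heA : e ∉ ⋃ C ∈ A, support C) :
    ∃ C ∈ O, IsPositive C ∧ e ∈ support C ∧ ∀ C' ∈ A, Disjoint (support C) (support C') := by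
  have hfin : ∀ C ∈ A, (support C).Finite := fun C hC => hor.finite_support_s12 (hA C hC).1
  rcases hor.exists_isPositive_or_cocircuit_nonneg hbin he (U := (⋃ C ∈ A, support C)ᶜ) heA with
    ⟨C, ⟨hC, hCe, hCU⟩, hpos⟩ | ⟨D, hD, hDe, hnonneg⟩
  · refine ⟨C, hC, hpos, by simp [hCe], ?_⟩
    rwa [subset_compl_iff_disjoint_right, disjoint_iUnion₂_right] at hCU
  · have hsum := hbin.finsum_mem_biUnion_support_eq_zero hA hfin hdisj hD
    have hDW := (hor.cocircuit_signature.signed D hD).support_subset_of_finsum_mem_eq_zero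
      (hbal D hD) (A.finite_toSet.biUnion hfin) hsum hnonneg
    exact absurd (hDW (show D e ≠ 0 by simp [hDe])) heA

end IsOrientation

end Orientation

/-- Every finitary binary balanced oriented matroid with countable ground set can be
partitioned into directed circuits: there is a set of positive signed circuits whose
domains are pairwise disjoint with union the ground set. -/
theorem countable_balanced_partition (M : Matroid α) [M.Finitary]
    (O Ostar : Set (α → ℤ))
    (hor : IsOrientation M O Ostar) (hbin : IsBinaryOrientation O Ostar)
    (hbal : IsBalanced Ostar) (hcount : M.E.Countable) :
    ∃ 𝒜 ⊆ O, (∀ C ∈ 𝒜, IsPositive C) ∧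
      𝒜.Pairwise (fun C C' => Disjoint (Function.support C) (Function.support C')) ∧
      ⋃ C ∈ 𝒜, Function.support C = M.E := by
  obtain ⟨𝒜, h𝒜, hdisj, hcover⟩ :=
    exists_pairwiseDisjoint_cover support {C ∈ O | IsPositive C} hcount
      fun A hA hAdisj e he heA => by
        obtain ⟨C, hC, hpos, heC, hCA⟩ := hor.exists_isPositive_disjoint hbin hbal hA hAdisj he heA
        exact ⟨C, ⟨hC, hpos⟩, heC, hCA⟩
  refine ⟨𝒜, fun C hC => (h𝒜 hC).1, fun C hC => (h𝒜 hC).2, hdisj, ?_⟩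
  exact (iUnion₂_subset fun C hC => hor.support_subset_ground_s12 (h𝒜 hC).1).antisymm hcover
end
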